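/- arXiv:1707.02226 — 6 statements merged into one kernel-verified Lean document; each statement's English description precedes it below -/
import Mathlib

section
/- Let p : E ⥤ B be a Grothendieck fibration and let b be an object of B. Then the canonical inclusion of the strict fiber E_b (the category whose objects are the objects e of E with p(e) = b and whose morphisms are the morphisms of E sent by p to the identity of b) into the structured-arrow category b ↓ p (objects: pairs (e, u : b → p(e)), the inclusion sending e to (e, id_b)) is an initial functor; consequently, for every functor F : E → V into a complete category V, the right Kan extension Ran_p F evaluated at b is the limit of the restriction of F to E_b. -/
open CategoryTheory CategoryTheory.Limits

universe v₁ v₂ v₃ u₁ u₂ u₃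

namespace Stmt0

variable {E : Type u₁} {B : Type u₂} [Category.{v₁} E] [Category.{v₂} B]

/-- The canonical inclusion of the strict fiber `E_b` of `p : E ⥤ B` over `b` (objects: `e : E`
with `p.obj e = b`; morphisms: those of `E` lying over `𝟙 b`) into the structured-arrow
category `b ↓ p`, sending `e` to the pair `(e, 𝟙 b)`. -/
def fiberToStructuredArrow (p : E ⥤ B) (b : B) :
    p.Fiber b ⥤ StructuredArrow b p where
  obj e := StructuredArrow.mk (Y := e.1) (eqToHom e.2.symm)
  map {e e'} φ := StructuredArrow.homMk φ.1 (by
    haveI := φ.2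
    have h := IsHomLift.fac' p (𝟙 b) φ.1
    dsimp
    rw [h]
    simp)

end Stmt0

open Stmt0

theorem Stmt0.fiber_isConnected {E : Type u₁} {B : Type u₂} [Category.{v₁} E] [Category.{v₂} B]
    (p : E ⥤ B) [p.IsFibered] (b : B) (c : StructuredArrow b p) :
    IsConnected (CostructuredArrow (fiberToStructuredArrow p b) c) := by
  obtain ⟨e, φ, hφ⟩ := Functor.IsPreFibered.exists_isCartesian' (p := p) c.hom
  have he : p.obj e = b := IsHomLift.domain_eq p c.hom φ
  have hfac : eqToHom he.symm ≫ p.map φ = c.hom := by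
    have h := IsHomLift.fac' p c.hom φ
    rw [h]
    simp
  let x : p.Fiber b := ⟨e, he⟩
  let t : CostructuredArrow (fiberToStructuredArrow p b) c :=
    CostructuredArrow.mk (Y := x) (StructuredArrow.homMk φ hfac)
  have key : ∀ (y : p.Fiber b) (ψ : y.1 ⟶ c.right), eqToHom y.2.symm ≫ p.map ψ = c.hom →
      ∃ χ : y ⟶ x, χ.1 ≫ φ = ψ ∧ ∀ χ' : y ⟶ x, χ'.1 ≫ φ = ψ → χ' = χ := by
    intro y ψ h
    have hl : p.IsHomLift c.hom ψ := by
      refine IsHomLift.of_fac' p c.hom _ y.2 rfl ?_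
      rw [← h, Category.assoc, eqToHom_trans_assoc, eqToHom_refl, eqToHom_refl,
        Category.id_comp, Category.comp_id]
    obtain ⟨χ, ⟨h1, h2⟩, h3⟩ := hφ.universal_property ψ
    exact ⟨⟨χ, h1⟩, h2, fun χ' h' => Subtype.ext (h3 χ'.1 ⟨χ'.2, h'⟩)⟩
  choose k hk hu using fun y : CostructuredArrow (fiberToStructuredArrow p b) c =>
    key y.left y.hom.right (StructuredArrow.w y.hom)
  have ht : IsTerminal t := IsTerminal.ofUniqueHom
    (fun y => CostructuredArrow.homMk (k y) (StructuredArrow.hom_ext _ _ (hk y)))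
    (fun y m => by
      apply CostructuredArrow.hom_ext
      exact hu y m.left (congrArg (fun k => StructuredArrow.Hom.right k) (CostructuredArrow.w m)))
  have := ht.hasTerminal
  exact isConnected_of_hasTerminal _

/-- Let `p : E ⥤ B` be a Grothendieck fibration and `b : B`.  Then the
canonical inclusion of the strict fiber `E_b` into the structured-arrow category `b ↓ p`
is an initial functor; consequently, for every functor `F : E ⥤ V` into a complete
category `V`, the right Kan extension `Ran_p F` evaluated at `b` is the limit of the
restriction of `F` to `E_b`. -/
theorem stmt0 {E : Type u₁} {B : Type u₂} [Category.{v₁} E] [Category.{v₂} B]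
    (p : E ⥤ B) [p.IsFibered] (b : B) :
    (fiberToStructuredArrow p b).Initial ∧
    ∀ {V : Type u₃} [Category.{v₃} V]
      [HasLimitsOfSize.{v₁, max u₁ v₂} V] [HasLimitsOfSize.{v₁, u₁} V]
      (F : E ⥤ V) (R : B ⥤ V) (α : p ⋙ R ⟶ F) (_ : R.IsRightKanExtension α),
      Nonempty (R.obj b ≅
        limit ((Functor.Fiber.fiberInclusion : p.Fiber b ⥤ E) ⋙ F)) := by
  have hI : (fiberToStructuredArrow p b).Initial := ⟨Stmt0.fiber_isConnected p b⟩
  refine ⟨hI, ?_⟩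
  intro V _ _ _ F R α hR
  have : p.HasPointwiseRightKanExtension F := fun Y => by
    unfold Functor.HasPointwiseRightKanExtensionAt
    infer_instance
  let h := Functor.isPointwiseRightKanExtensionOfIsRightKanExtension R α b
  let h' := (Functor.Initial.isLimitWhiskerEquiv (fiberToStructuredArrow p b) _).symm h
  exact ⟨h'.conePointUniqueUpToIso
    (limit.isLimit ((Functor.Fiber.fiberInclusion : p.Fiber b ⥤ E) ⋙ F))⟩
end

section
/- Let L : C ⥤ D and R : D ⥤ C be an adjoint pair L ⊣ R with unit η̄ : id_C ⇒ R∘L and counit ε̄ : L∘R ⇒ id_D, and let (T, μ, η) be a monad on C. Assume that ε̄ is a natural isomorphism and that the natural transformation L∘T ⇒ L∘T∘R∘L with components L(T(η̄_c)) is a natural isomorphism. Then the composite functor L∘T∘R carries a monad structure on D whose multiplication is the composite LTRLTR ⇒ LTTR ⇒ LTR (the inverse of the isomorphism L(T(η̄)) whiskered with T∘R, followed by L(μ R)) and whose unit is the composite id_D ⇒ LR ⇒ LTR (the inverse of ε̄ followed by L(η R)); i.e. these data satisfy the monad unit and associativity laws. -/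
open CategoryTheory

universe v₁ v₂ u₁ u₂

namespace Stmt5

variable {C : Type u₁} {D : Type u₂} [Category.{v₁} C] [Category.{v₂} D]

/-- The composite endofunctor `L ∘ T ∘ R` on `D`. -/
abbrev ltr (L : C ⥤ D) (R : D ⥤ C) (T : CategoryTheory.Monad C) : D ⥤ D :=
  R ⋙ (T : C ⥤ C) ⋙ L

/-- The unit of the induced monad structure at `d`: the composite
`d ⟶ LR(d) ⟶ LTR(d)`, i.e. the inverse of `ε̄_d` followed by `L(η_{R d})`. -/
noncomputable def ltrUnit (L : C ⥤ D) (R : D ⥤ C) (adj : L ⊣ R) (T : CategoryTheory.Monad C)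
    [∀ d : D, IsIso (adj.counit.app d)] (d : D) : d ⟶ (ltr L R T).obj d :=
  inv (adj.counit.app d) ≫ L.map (T.η.app (R.obj d))

/-- The multiplication of the induced monad structure at `d`: the composite
`LTRLTR(d) ⟶ LTTR(d) ⟶ LTR(d)`, i.e. the inverse of the component at `TR(d)` of the
natural isomorphism `L(T(η̄))`, followed by `L(μ_{R d})`. -/
noncomputable def ltrMul (L : C ⥤ D) (R : D ⥤ C) (adj : L ⊣ R) (T : CategoryTheory.Monad C)
    [∀ c : C, IsIso (L.map ((T : C ⥤ C).map (adj.unit.app c)))] (d : D) :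
    (ltr L R T).obj ((ltr L R T).obj d) ⟶ (ltr L R T).obj d :=
  inv (L.map ((T : C ⥤ C).map (adj.unit.app ((T : C ⥤ C).obj (R.obj d))))) ≫
    L.map (T.μ.app (R.obj d))

end Stmt5

open Stmt5

theorem Stmt5.inv_nat {C : Type u₁} {D : Type u₂} [Category.{v₁} C] [Category.{v₂} D]
    (L : C ⥤ D) (R : D ⥤ C) (adj : L ⊣ R) (T : CategoryTheory.Monad C)
    [∀ c : C, IsIso (L.map ((T : C ⥤ C).map (adj.unit.app c)))] {c c' : C} (f : c ⟶ c') :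
    L.map ((T : C ⥤ C).map (R.map (L.map f))) ≫ inv (L.map ((T : C ⥤ C).map (adj.unit.app c')))
      = inv (L.map ((T : C ⥤ C).map (adj.unit.app c))) ≫ L.map ((T : C ⥤ C).map f) := by
  rw [IsIso.comp_inv_eq, Category.assoc, IsIso.eq_inv_comp]
  simp only [← Functor.map_comp]
  congr 2
  exact (adj.unit.naturality f).symm

/-- Let `L ⊣ R` be an adjunction with unit `η̄` and counit `ε̄` and let
`(T, μ, η)` be a monad on `C`.  Assume that `ε̄` is a natural isomorphism and that the
natural transformation `L∘T ⇒ L∘T∘R∘L` with components `L(T(η̄_c))` is a natural isomorphism.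
Then the composite functor `L∘T∘R` carries a monad structure on `D` with multiplication
`LTRLTR ⇒ LTTR ⇒ LTR` (the inverse of `L(T(η̄))` whiskered with `T∘R`, followed by `L(μ R)`)
and unit `id_D ⇒ LR ⇒ LTR` (the inverse of `ε̄` followed by `L(η R)`): these data are natural
and satisfy the monad unit and associativity laws. -/
theorem stmt5 {C : Type u₁} {D : Type u₂} [Category.{v₁} C] [Category.{v₂} D]
    (L : C ⥤ D) (R : D ⥤ C) (adj : L ⊣ R) (T : CategoryTheory.Monad C)
    [∀ d : D, IsIso (adj.counit.app d)]
    [∀ c : C, IsIso (L.map ((T : C ⥤ C).map (adj.unit.app c)))] :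
    -- the unit is a natural transformation
    (∀ {d d' : D} (f : d ⟶ d'),
      f ≫ ltrUnit L R adj T d' = ltrUnit L R adj T d ≫ (ltr L R T).map f) ∧
    -- the multiplication is a natural transformation
    (∀ {d d' : D} (f : d ⟶ d'),
      (ltr L R T).map ((ltr L R T).map f) ≫ ltrMul L R adj T d'
        = ltrMul L R adj T d ≫ (ltr L R T).map f) ∧
    -- left unit law
    (∀ d : D, ltrUnit L R adj T ((ltr L R T).obj d) ≫ ltrMul L R adj T d = 𝟙 _) ∧
    -- right unit law
    (∀ d : D, (ltr L R T).map (ltrUnit L R adj T d) ≫ ltrMul L R adj T d = 𝟙 _) ∧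
    -- associativity law
    (∀ d : D, (ltr L R T).map (ltrMul L R adj T d) ≫ ltrMul L R adj T d
        = ltrMul L R adj T ((ltr L R T).obj d) ≫ ltrMul L R adj T d) := by
  refine ⟨?_, ?_, ?_, ?_, ?_⟩
  · intro d d' f
    have h1 : f ≫ inv (adj.counit.app d') = inv (adj.counit.app d) ≫ L.map (R.map f) := by
      rw [IsIso.comp_inv_eq, Category.assoc, IsIso.eq_inv_comp]
      exact (adj.counit.naturality f).symm
    have h2 := T.η.naturality (R.map f)
    simp only [Functor.id_map] at h2
    simp only [ltrUnit, Functor.comp_map, Category.assoc, ← Functor.map_comp, ← h2]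
    rw [Functor.map_comp, reassoc_of% h1]
  · intro d d' f
    have h1 := inv_nat L R adj T ((T : C ⥤ C).map (R.map f))
    have h2 := T.μ.naturality (R.map f)
    simp only [Functor.comp_map] at h2
    simp only [ltrMul, Functor.comp_map, Category.assoc]
    rw [reassoc_of% h1, ← L.map_comp, h2, L.map_comp]
  · intro d
    have h1 : inv (adj.counit.app (L.obj ((T : C ⥤ C).obj (R.obj d))))
        = L.map (adj.unit.app ((T : C ⥤ C).obj (R.obj d))) := by
      rw [IsIso.inv_eq_of_inv_hom_id]
      exact adj.left_triangle_components _
    have h2 := T.η.naturality (adj.unit.app ((T : C ⥤ C).obj (R.obj d)))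
    simp only [Functor.id_map] at h2
    have h3 := congrArg L.map h2
    simp only [Functor.map_comp] at h3
    have h4 := congrArg L.map (T.left_unit (R.obj d))
    simp only [Functor.map_comp] at h4
    dsimp only [ltrUnit, ltrMul, Functor.comp_obj]
    rw [h1, Category.assoc]
    erw [reassoc_of% h3]
    rw [IsIso.hom_inv_id_assoc]
    exact h4.trans (L.map_id _)
  · intro d
    have h1 := inv_nat L R adj T (T.η.app (R.obj d))
    have h4 := congrArg L.map (T.right_unit (R.obj d))
    simp only [Functor.map_comp, Functor.map_id] at h4
    have h5 : inv (L.map ((T : C ⥤ C).map (adj.unit.app (R.obj d))))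
        = L.map ((T : C ⥤ C).map (R.map (adj.counit.app d))) := by
      apply IsIso.inv_eq_of_hom_inv_id
      simp only [← Functor.map_comp]
      rw [adj.right_triangle_components]
      simp
    simp only [ltrUnit, ltrMul, Functor.comp_map, Functor.map_comp, Category.assoc]
    erw [reassoc_of% h1]
    rw [h4, h5]
    simp only [Category.comp_id, ← Functor.map_comp, IsIso.inv_hom_id]
    simp
    rw [← h5, IsIso.hom_inv_id]
  · intro d
    have h1 := inv_nat L R adj T (T.μ.app (R.obj d))
    have h4 := congrArg L.map (T.assoc (R.obj d))
    simp only [Functor.map_comp] at h4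
    have h2 := inv_nat L R adj T
      ((T : C ⥤ C).map (adj.unit.app ((T : C ⥤ C).obj (R.obj d))))
    have h3 := congrArg L.map (T.μ.naturality (adj.unit.app ((T : C ⥤ C).obj (R.obj d))))
    simp only [Functor.map_comp, Functor.comp_map] at h3
    simp only [ltrMul, Functor.comp_map, Functor.map_comp, Category.assoc, Functor.map_inv]
    erw [reassoc_of% h1]
    rw [h4, IsIso.inv_comp_eq]
    erw [reassoc_of% h2, reassoc_of% h3]
    rw [IsIso.hom_inv_id_assoc]
end

section
/- Let L : C ⥤ D and R : D ⥤ C be an adjoint pair L ⊣ R with unit η̄ and counit ε̄, let (T, μ, η) be a monad on C, assume ε̄ : L∘R ⇒ id_D and L(T(η̄)) : L∘T ⇒ L∘T∘R∘L are natural isomorphisms, and equip L∘T∘R with the induced monad structure (multiplication LTRLTR ⇒ LTTR ⇒ LTR via the inverse of L(T(η̄)) whiskered with T∘R followed by L(μ R); unit id_D ⇒ LR ⇒ LTR via the inverse of ε̄ followed by L(η R)). Then for every object d of D and every morphism h : LTR(d) → d, the map h makes d into an algebra for the monad L∘T∘R if and only if its adjunct T(R(d)) → R(d) under the adjunction L ⊣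 R makes R(d) into an algebra for the monad T. -/
open CategoryTheory

universe v₁ v₂ u₁ u₂

namespace Stmt6

variable {C : Type u₁} {D : Type u₂} [Category.{v₁} C] [Category.{v₂} D]

/-- The composite endofunctor `L ∘ T ∘ R` on `D`. -/
abbrev ltr (L : C ⥤ D) (R : D ⥤ C) (T : CategoryTheory.Monad C) : D ⥤ D :=
  R ⋙ (T : C ⥤ C) ⋙ L

/-- The unit of the induced monad structure on `L∘T∘R` at `d`: the inverse of `ε̄_d`
followed by `L(η_{R d})`. -/
noncomputable def ltrUnit (L : C ⥤ D) (R : D ⥤ C) (adj : L ⊣ R) (T : CategoryTheory.Monad C)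
    [∀ d : D, IsIso (adj.counit.app d)] (d : D) : d ⟶ (ltr L R T).obj d :=
  inv (adj.counit.app d) ≫ L.map (T.η.app (R.obj d))

/-- The multiplication of the induced monad structure on `L∘T∘R` at `d`: the inverse of the
component at `TR(d)` of the natural isomorphism `L(T(η̄))`, followed by `L(μ_{R d})`. -/
noncomputable def ltrMul (L : C ⥤ D) (R : D ⥤ C) (adj : L ⊣ R) (T : CategoryTheory.Monad C)
    [∀ c : C, IsIso (L.map ((T : C ⥤ C).map (adj.unit.app c)))] (d : D) :
    (ltr L R T).obj ((ltr L R T).obj d) ⟶ (ltr L R T).obj d :=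
  inv (L.map ((T : C ⥤ C).map (adj.unit.app ((T : C ⥤ C).obj (R.obj d))))) ≫
    L.map (T.μ.app (R.obj d))

end Stmt6

open Stmt6

/-- Let `L ⊣ R` be an adjunction with unit `η̄` and counit `ε̄`, let `T` be a
monad on `C`, assume `ε̄ : L∘R ⇒ id_D` and `L(T(η̄)) : L∘T ⇒ L∘T∘R∘L` are natural isomorphisms,
and equip `L∘T∘R` with the induced monad structure.  Then for every object `d` of `D` and
every morphism `h : LTR(d) ⟶ d`, the map `h` makes `d` into an algebra for the monad `L∘T∘R`
if and only if its adjunct `T(R(d)) ⟶ R(d)` under `L ⊣ R` makes `R(d)` into an algebra for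
the monad `T`. -/
theorem stmt6 {C : Type u₁} {D : Type u₂} [Category.{v₁} C] [Category.{v₂} D]
    (L : C ⥤ D) (R : D ⥤ C) (adj : L ⊣ R) (T : CategoryTheory.Monad C)
    [∀ d : D, IsIso (adj.counit.app d)]
    [∀ c : C, IsIso (L.map ((T : C ⥤ C).map (adj.unit.app c)))]
    (d : D) (h : (ltr L R T).obj d ⟶ d) :
    (ltrUnit L R adj T d ≫ h = 𝟙 d ∧
      (ltr L R T).map h ≫ h = ltrMul L R adj T d ≫ h) ↔
    (T.η.app (R.obj d) ≫ (adj.homEquiv ((T : C ⥤ C).obj (R.obj d)) d) h = 𝟙 (R.obj d) ∧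
      (T : C ⥤ C).map ((adj.homEquiv ((T : C ⥤ C).obj (R.obj d)) d) h) ≫
          (adj.homEquiv ((T : C ⥤ C).obj (R.obj d)) d) h
        = T.μ.app (R.obj d) ≫ (adj.homEquiv ((T : C ⥤ C).obj (R.obj d)) d) h) := by
  refine and_congr ?_ ?_
  · have e : 𝟙 (R.obj d) = adj.homEquiv (R.obj d) d (adj.counit.app d) := by
      simp [adj.homEquiv_unit]
    rw [← adj.homEquiv_naturality_left, e]
    refine Iff.trans ?_ ((adj.homEquiv (R.obj d) d).apply_eq_iff_eq).symm
    simp only [ltrUnit, Category.assoc]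
    rw [IsIso.inv_comp_eq, Category.comp_id]
  · rw [← adj.homEquiv_naturality_left, ← adj.homEquiv_naturality_left]
    refine Iff.trans ?_
      ((adj.homEquiv (T.obj (T.obj (R.obj d))) d).apply_eq_iff_eq).symm
    rw [adj.homEquiv_unit]
    simp only [ltrMul, Category.assoc, Functor.map_comp]
    rw [IsIso.eq_inv_comp]
    exact Iff.rfl
end

section
/- Let T be a finite partial order such that for every e ∈ T the set Ici(e) = {f ∈ T : e ≤ f} is totally ordered. Suppose e, f ∈ T are incomparable and b is a least upper bound of {e, f}. Then e < b and f < b, the sets {x : e ≤ x and x < b} and {x : f ≤ x and x < b} have greatest elements p and q respectively, and p ≠ q. -/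
/-- Let `T` be a finite partial order such that for every `e ∈ T` the set
`Ici e = {f : e ≤ f}` is totally ordered.  Suppose `e, f ∈ T` are incomparable and `b` is a
least upper bound of `{e, f}`.  Then `e < b` and `f < b`, the sets `{x | e ≤ x ∧ x < b}` and
`{x | f ≤ x ∧ x < b}` have greatest elements `p` and `q` respectively, and `p ≠ q`. -/
theorem stmt8 {T : Type*} [PartialOrder T] [Finite T]
    (hchain : ∀ e : T, IsChain (· ≤ ·) (Set.Ici e))
    {e f b : T} (hef : ¬ e ≤ f) (hfe : ¬ f ≤ e)
    (hb : IsLUB {e, f} b) :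
    e < b ∧ f < b ∧
      ∃ p q : T, IsGreatest {x : T | e ≤ x ∧ x < b} p ∧
        IsGreatest {x : T | f ≤ x ∧ x < b} q ∧ p ≠ q := by
  have heb : e ≤ b := hb.1 (by simp)
  have hfb : f ≤ b := hb.1 (by simp)
  have heb' : e < b := lt_of_le_of_ne heb (fun h => hfe (h ▸ hfb))
  have hfb' : f < b := lt_of_le_of_ne hfb (fun h => hef (h ▸ heb))
  have key : ∀ a : T, a < b → ∃ p, IsGreatest {x : T | a ≤ x ∧ x < b} p := by
    intro a ha
    obtain ⟨p, hp⟩ := (Set.toFinite {x : T | a ≤ x ∧ x < b}).exists_maximal ⟨a, le_rfl, ha⟩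
    refine ⟨p, hp.1, fun x hx => ?_⟩
    rcases (hchain a).total hx.1 hp.1.1 with h | h
    · exact h
    · exact hp.2 hx h
  obtain ⟨p, hp⟩ := key e heb'
  obtain ⟨q, hq⟩ := key f hfb'
  refine ⟨heb', hfb', p, q, hp, hq, ?_⟩
  rintro rfl
  have hbp : b ≤ p := hb.2 (by
    rintro x (rfl | rfl)
    · exact hp.1.1
    · exact hq.1.1)
  exact absurd hp.1.2 (not_lt_of_ge hbp)
end

section
/- Let T be a partial order such that for every e ∈ T the set Ici(e) = {f ∈ T : e ≤ f} is totally ordered. Suppose e, f ∈ T are incomparable, e' ≤ e and f' ≤ f, and suppose b is a least upper bound of {e, f} and b' is a least upper bound of {e', f'}. Then b' = b. -/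
/-- Let `T` be a partial order such that for every `e ∈ T` the set
`Ici e = {f : e ≤ f}` is totally ordered.  Suppose `e, f ∈ T` are incomparable, `e' ≤ e` and
`f' ≤ f`, and suppose `b` is a least upper bound of `{e, f}` and `b'` is a least upper bound
of `{e', f'}`.  Then `b' = b`. -/
theorem stmt9 {T : Type*} [PartialOrder T]
    (hchain : ∀ e : T, IsChain (· ≤ ·) (Set.Ici e))
    {e f e' f' b b' : T} (hef : ¬ e ≤ f) (hfe : ¬ f ≤ e)
    (he' : e' ≤ e) (hf' : f' ≤ f)
    (hb : IsLUB {e, f} b) (hb' : IsLUB {e', f'} b') :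
    b' = b := by
  have h1 : e' ≤ b' := hb'.1 (by simp)
  have h2 : f' ≤ b' := hb'.1 (by simp)
  have h3 : e ≤ b := hb.1 (by simp)
  have h4 : f ≤ b := hb.1 (by simp)
  have tot : ∀ {a x y : T}, a ≤ x → a ≤ y → x ≤ y ∨ y ≤ x :=
    fun {a x y} hx hy => (hchain a).total (Set.mem_Ici.2 hx) (Set.mem_Ici.2 hy)
  have h5 : e ≤ b' := by
    rcases tot he' h1 with h | h
    · exact h
    · rcases tot (h2.trans h) hf' with h | h
      · exact absurd h hef
      · exact absurd h hfe
  have h6 : f ≤ b' := by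
    rcases tot hf' h2 with h | h
    · exact h
    · rcases tot he' (h1.trans h) with h | h
      · exact absurd h hef
      · exact absurd h hfe
  apply le_antisymm
  · apply hb'.2
    rintro x (rfl | rfl)
    · exact he'.trans h3
    · exact hf'.trans h4
  · apply hb.2
    rintro x (rfl | rfl)
    · exact h5
    · exact h6
end

section
/- Let G be a group, E a nonempty finite set, W = Σ_E ≀ G the wreath product, and F a family of subgroups of G. Fix e ∈ E. Then for every subgroup K of W the following are equivalent: (a) π_e((w K w⁻¹) ∩ S_e) ∈ F for every w ∈ W; (b) π_{e'}(K ∩ S_{e'}) ∈ F for every e' ∈ E. In particular, condition (a) does not depend on the chosen element e; condition (a) is the defining condition for membership of K in the semidirect power family F^{⋉E} = (ι_{S_e})_*((π_e)*(F)), so this establishes the explicit description of F^{⋉E}. -/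
/-- A *family of subgroups* of a group `G`: a set of subgroups closed under conjugation and
under passing to subgroups. -/
def IsSubgroupFamily {G : Type*} [Group G] (F : Set (Subgroup G)) : Prop :=
  (∀ H ∈ F, ∀ g : G, Subgroup.map (MulAut.conj g).toMonoidHom H ∈ F) ∧
  (∀ H ∈ F, ∀ K : Subgroup G, K ≤ H → K ∈ F)

/-- The action of `Perm E` on the product group `E → G`, permuting coordinates:
`(σ • f) e = f (σ⁻¹ e)`. -/
def permMulAut (E G : Type*) [Group G] : Equiv.Perm E →* MulAut (E → G) where
  toFun σ := MulEquiv.arrowCongr σ (MulEquiv.refl G)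
  map_one' := by ext f e; rfl
  map_mul' σ τ := by ext f e; rfl

/-- The wreath product `Σ_E ≀ G`, i.e. the semidirect product `Perm E ⋉ Gᴱ`: elements are
pairs `(f, σ)` with `f : E → G` and `σ : Perm E`, and multiplication is
`(f₁, σ₁)(f₂, σ₂) = (f₁ · (σ₁ • f₂), σ₁σ₂)`. -/
abbrev Wreath (E G : Type*) [Group G] := SemidirectProduct (E → G) (Equiv.Perm E) (permMulAut E G)

/-- The subgroup `S_e ≤ Σ_E ≀ G` of pairs `(f, σ)` with `σ e = e`. -/
def wreathStab (E G : Type*) [Group G] (e : E) : Subgroup (Wreath E G) :=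
  (MulAction.stabilizer (Equiv.Perm E) e).comap SemidirectProduct.rightHom

/-- The group homomorphism `π_e : S_e →* G`, `(f, σ) ↦ f e`. -/
def wreathProj (E G : Type*) [Group G] (e : E) : (wreathStab E G e) →* G where
  toFun w := (w : Wreath E G).left e
  map_one' := rfl
  map_mul' a b := by
    have h : (↑a : Wreath E G).right e = e := a.2
    have ha : ((↑a : Wreath E G).right).symm e = e := (Equiv.symm_apply_eq _).mpr h.symm
    show ((a : Wreath E G) * (b : Wreath E G)).left e = _
    rw [SemidirectProduct.mul_left]
    simp [permMulAut, ha]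

/-- The image `π_e(K ∩ S_e) ≤ G` of the intersection of `K` with `S_e`. -/
def wreathProjOf {E G : Type*} [Group G] (K : Subgroup (Wreath E G)) (e : E) : Subgroup G :=
  Subgroup.map (wreathProj E G e) (K.subgroupOf (wreathStab E G e))

theorem mem_wreathProjOf {E G : Type*} [Group G] (K : Subgroup (Wreath E G)) (e : E) (g : G) :
    g ∈ wreathProjOf K e ↔ ∃ k ∈ K, k.right e = e ∧ k.left e = g := by
  constructor
  · rintro ⟨k, hk, rfl⟩
    exact ⟨k.1, hk, k.2, rfl⟩
  · rintro ⟨k, hk, h, rfl⟩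
    exact ⟨⟨k, h⟩, hk, rfl⟩

theorem wreath_mul_left_apply {E G : Type*} [Group G] (a b : Wreath E G) (e : E) :
    (a * b).left e = a.left e * b.left (a.right.symm e) := rfl

theorem wreath_conj_le {E G : Type*} [Group G] (K : Subgroup (Wreath E G)) (w : Wreath E G)
    (e : E) : wreathProjOf (Subgroup.map (MulAut.conj w).toMonoidHom K) e ≤
      Subgroup.map (MulAut.conj (w.left e)).toMonoidHom (wreathProjOf K (w.right.symm e)) := by
  intro g hg
  obtain ⟨_, ⟨k, hk, rfl⟩, h, rfl⟩ := (mem_wreathProjOf _ _ _).1 hg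
  have h1 : w.right (k.right (w.right.symm e)) = e := h
  have h2 : k.right (w.right.symm e) = w.right.symm e := (Equiv.eq_symm_apply _).2 h1
  refine ⟨k.left (w.right.symm e), (mem_wreathProjOf _ _ _).2 ⟨k, hk, h2, rfl⟩, ?_⟩
  have h3 : k.right.symm (w.right.symm e) = w.right.symm e := (Equiv.symm_apply_eq _).2 h2.symm
  have h4 : (w⁻¹).left (w.right.symm e) = (w.left e)⁻¹ := by
    have := wreath_mul_left_apply w w⁻¹ e
    rw [mul_inv_cancel] at this
    exact (inv_eq_of_mul_eq_one_right this.symm).symm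
  change w.left e * k.left (w.right.symm e) * (w.left e)⁻¹ = (w * k * w⁻¹).left e
  rw [wreath_mul_left_apply, wreath_mul_left_apply]
  change _ = _ * (w⁻¹).left (k.right.symm (w.right.symm e))
  rw [h3, h4]

/-- Let `G` be a group, `E` a nonempty finite set, `W = Σ_E ≀ G` the wreath
product, and `F` a family of subgroups of `G`.  Fix `e ∈ E`.  Then for every subgroup
`K ≤ W` the following are equivalent: (a) `π_e((w K w⁻¹) ∩ S_e) ∈ F` for every `w ∈ W`;
(b) `π_{e'}(K ∩ S_{e'}) ∈ F` for every `e' ∈ E`.  In particular condition (a) does not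
depend on the chosen element `e`; (a) is the defining condition for membership of `K` in
the semidirect power family `F^{⋉E} = (ι_{S_e})_*((π_e)*(F))`, so this establishes the
explicit description of `F^{⋉E}`. -/
theorem stmt14 {E G : Type*} [Finite E] [Nonempty E] [Group G]
    (F : Set (Subgroup G)) (hF : IsSubgroupFamily F) (e : E)
    (K : Subgroup (Wreath E G)) :
    (∀ w : Wreath E G,
        wreathProjOf (Subgroup.map (MulAut.conj w).toMonoidHom K) e ∈ F) ↔
    (∀ e' : E, wreathProjOf K e' ∈ F) := by
  classical
  constructor
  · intro h e'
    let w : Wreath E G := SemidirectProduct.inr (Equiv.swap e e')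
    have hK : Subgroup.map (MulAut.conj w⁻¹).toMonoidHom
        (Subgroup.map (MulAut.conj w).toMonoidHom K) = K := by
      ext x
      simp [Subgroup.mem_map, mul_assoc]
    have hle := wreath_conj_le (Subgroup.map (MulAut.conj w).toMonoidHom K) w⁻¹ e'
    have he : (w⁻¹).right.symm e' = e := by
      change Equiv.swap e e' e' = e
      simp
    rw [hK, he] at hle
    exact hF.2 _ (hF.1 _ (h w) _) _ hle
  · intro h w
    exact hF.2 _ (hF.1 _ (h _) _) _ (wreath_conj_le K w e)
end
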